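/- Let ν be a nonzero real number and let l, u be integers with l ≥ 1 and u ≥ 1. Then Σ_{i=1}^{u} binom(1−lν, i) · ( Σ_{(j_1,…,j_i)∈T(i,u)} binom(ν^{-1}, j_1)⋯binom(ν^{-1}, j_i) ) = binom(ν^{-1} − l, u). -/

import Mathlib

noncomputable section

open scoped Classical

/-- The generalized binomial coefficient `a (a-1) ⋯ (a-k+1) / k!` in a field `K`
(of characteristic zero in all uses). -/
def gbinom {K : Type*} [Field K] (a : K) (k : ℕ) : K :=
  (∏ i ∈ Finset.range k, (a - (i : K))) / (k.factorial : K)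

/-- `Tsum x i l = Σ_{(j₁,…,j_i) ∈ T(i,l)} binom(x,j₁)⋯binom(x,j_i)`, the sum over all
`i`-tuples of positive integers with sum `l` (a finitely supported sum). -/
def Tsum (x : ℝ) (i l : ℕ) : ℝ :=
  ∑ᶠ c : Fin i → ℕ,
    if (∀ t, 1 ≤ c t) ∧ (∑ t, c t) = l then ∏ t, gbinom x (c t) else 0

end

lemma gbinom_eq_choose (a : ℝ) (k : ℕ) : gbinom a k = Ring.choose a k := by
  have h : (descPochhammer ℤ k).smeval a = ∏ i ∈ Finset.range k, (a - (i : ℝ)) := by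
    rw [← Polynomial.aeval_eq_smeval, Polynomial.aeval_def, ← Polynomial.eval_map,
      descPochhammer_map, descPochhammer_eval_eq_prod_range]
  rw [Ring.choose_eq_smul, gbinom, h, smul_eq_mul, div_eq_inv_mul]

lemma gbinom_nat (n k : ℕ) : gbinom (n : ℝ) k = n.choose k := by
  rw [gbinom_eq_choose, Ring.choose_natCast]

lemma Tsum_eq_coeff (x : ℝ) (i u : ℕ) :
    Tsum x i u = PowerSeries.coeff u ((PowerSeries.binomialSeries ℝ x - 1) ^ i) := by
  classical
  have h1 : (PowerSeries.binomialSeries ℝ x - 1) ^ i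
      = ∏ _t : Fin i, (PowerSeries.binomialSeries ℝ x - 1) := by simp
  rw [h1, PowerSeries.coeff_prod, Tsum,
    finsum_eq_sum_of_support_subset
      (s := (Finset.finsuppAntidiag Finset.univ u).image (fun c : Fin i →₀ ℕ => (c : Fin i → ℕ)))]
  · rw [Finset.sum_image (fun a _ b _ h => DFunLike.coe_injective h)]
    refine Finset.sum_congr rfl fun c hc => ?_
    have hs : ∑ t, c t = u := (Finset.mem_finsuppAntidiag.1 hc).1
    by_cases h : ∀ t, 1 ≤ c t
    · rw [if_pos ⟨h, hs⟩]
      refine Finset.prod_congr rfl fun t _ => ?_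
      have := h t
      rw [map_sub, PowerSeries.binomialSeries_coeff, PowerSeries.coeff_one,
        if_neg (by omega), gbinom_eq_choose]
      simp
    · rw [if_neg (fun h' => h h'.1)]
      push Not at h
      obtain ⟨t, ht⟩ := h
      have h0 : c t = 0 := by omega
      symm
      apply Finset.prod_eq_zero (Finset.mem_univ t)
      rw [h0]
      simp
  · intro c hc
    simp only [Function.mem_support, ne_eq, ite_eq_right_iff, Classical.not_imp] at hc
    simp only [Finset.coe_image, Set.mem_image, Finset.mem_coe, Finset.mem_finsuppAntidiag]
    refine ⟨Finsupp.equivFunOnFinite.symm c, ⟨?_, by simp⟩, by simp⟩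
    simpa using hc.1.2

lemma coeff_pow_gt (x : ℝ) (i u : ℕ) (h : u < i) :
    PowerSeries.coeff u ((PowerSeries.binomialSeries ℝ x - 1) ^ i) = 0 := by
  apply PowerSeries.coeff_of_lt_order
  refine lt_of_lt_of_le ?_ (PowerSeries.le_order_pow_of_constantCoeff_eq_zero i (by simp))
  exact_mod_cast h

lemma binomialSeries_nat_mul (x : ℝ) (n : ℕ) :
    PowerSeries.binomialSeries ℝ ((n : ℝ) * x) = PowerSeries.binomialSeries ℝ x ^ n := by
  induction n with
  | zero =>
    have := PowerSeries.binomialSeries_nat (R := ℝ) (A := ℝ) 0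
    simpa using this
  | succ n ih =>
    rw [pow_succ, ← ih, ← PowerSeries.binomialSeries_add]
    push_cast
    ring_nf

lemma nat_identity (x : ℝ) (n u : ℕ) (hu : 1 ≤ u) :
    ∑ i ∈ Finset.Icc 1 u, gbinom (n : ℝ) i * Tsum x i u = gbinom ((n : ℝ) * x) u := by
  have h := congrArg (PowerSeries.coeff u) (binomialSeries_nat_mul x n)
  rw [PowerSeries.binomialSeries_coeff, ← gbinom_eq_choose, smul_eq_mul, mul_one] at h
  rw [h]
  have h2 : PowerSeries.binomialSeries ℝ x = (PowerSeries.binomialSeries ℝ x - 1) + 1 := by ring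
  rw [h2, add_pow, map_sum]
  have h3 : ∀ i, PowerSeries.coeff u ((PowerSeries.binomialSeries ℝ x - 1) ^ i * 1 ^ (n - i)
      * (n.choose i : PowerSeries ℝ)) = gbinom (n : ℝ) i * Tsum x i u := by
    intro i
    rw [gbinom_nat, Tsum_eq_coeff, one_pow, mul_one, mul_comm, ← nsmul_eq_mul, map_nsmul,
      nsmul_eq_mul]
  rw [Finset.sum_congr rfl (fun i _ => h3 i)]
  rw [Finset.sum_subset (s₂ := Finset.range (n + u + 1)) (s₁ := Finset.Icc 1 u),
    Finset.sum_subset (s₂ := Finset.range (n + u + 1)) (s₁ := Finset.range (n + 1))]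
  · intro i; simp only [Finset.mem_range]; omega
  · intro i _ hi
    simp only [Finset.mem_range] at hi
    rw [gbinom_nat, Nat.choose_eq_zero_of_lt (by omega)]; simp
  · intro i; simp only [Finset.mem_range, Finset.mem_Icc]; omega
  · intro i _ hi
    simp only [Finset.mem_Icc] at hi
    rw [Tsum_eq_coeff]
    by_cases h0 : i = 0
    · subst h0
      rw [pow_zero, PowerSeries.coeff_one, if_neg (by omega), mul_zero]
    · rw [coeff_pow_gt _ _ _ (by omega), mul_zero]

lemma gbinom_poly (x : ℝ) (k : ℕ) :
    ∃ p : Polynomial ℝ, ∀ a : ℝ, p.eval a = gbinom (a * x) k := by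
  refine ⟨Polynomial.C ((k.factorial : ℝ)⁻¹) *
    ∏ i ∈ Finset.range k, (Polynomial.X * Polynomial.C x - Polynomial.C (i : ℝ)), fun a => ?_⟩
  rw [gbinom, Polynomial.eval_mul, Polynomial.eval_prod, Polynomial.eval_C, div_eq_inv_mul]
  simp only [Polynomial.eval_sub, Polynomial.eval_mul, Polynomial.eval_X, Polynomial.eval_C]

lemma real_identity (x a : ℝ) (u : ℕ) (hu : 1 ≤ u) :
    ∑ i ∈ Finset.Icc 1 u, gbinom a i * Tsum x i u = gbinom (a * x) u := by
  choose p hp using gbinom_poly 1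
  obtain ⟨q, hq⟩ := gbinom_poly x u
  have key : ∑ i ∈ Finset.Icc 1 u, p i * Polynomial.C (Tsum x i u) = q := by
    apply Polynomial.eq_of_infinite_eval_eq
    refine (Set.infinite_range_of_injective (Nat.cast_injective (R := ℝ))).mono ?_
    rintro _ ⟨n, rfl⟩
    simp only [Set.mem_setOf_eq, Polynomial.eval_finset_sum, Polynomial.eval_mul,
      Polynomial.eval_C, hp, hq, mul_one]
    exact nat_identity x n u hu
  have := congrArg (Polynomial.eval a) key
  simpa only [Polynomial.eval_finset_sum, Polynomial.eval_mul,
      Polynomial.eval_C, hp, hq, mul_one] using this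

/-- for a nonzero real `ν` and integers `l, u ≥ 1`:
`Σ_{i=1}^{u} binom(1−lν, i) · (Σ_{(j₁,…,j_i)∈T(i,u)} binom(ν⁻¹,j₁)⋯binom(ν⁻¹,j_i))
  = binom(ν⁻¹ − l, u)`. -/
theorem binom_Tsum_identity (ν : ℝ) (hν : ν ≠ 0) (l u : ℕ) (hl : 1 ≤ l) (hu : 1 ≤ u) :
    ∑ i ∈ Finset.Icc 1 u, gbinom (1 - (l : ℝ) * ν) i * Tsum ν⁻¹ i u =
      gbinom (ν⁻¹ - l) u := by
  rw [real_identity _ _ _ hu]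
  congr 1
  field_simp
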